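/- Let G be a finite group, S a Sylow 2-subgroup of G, and H a subgroup with S ≤ H ≤ G. Suppose that for all abelian subgroups A, B ≤ S of exponent dividing 4 and every g ∈ G with gAg⁻¹ ≤ B, there exists h ∈ H with hxh⁻¹ = gxg⁻¹ for all x ∈ A. Then H controls 2-fusion in G: for all subgroups P, Q ≤ S and every g ∈ G with gPg⁻¹ ≤ Q there exists h ∈ H with hxh⁻¹ = gxg⁻¹ for all x ∈ P. -/

import Mathlib

/-!
A maximal normal abelian subgroup `A` of exponent dividing `4` of a finite `2`-group `P` contains
every `x ∈ C_P(A)` with `x ^ 4 = 1` (Alperin). An automorphism `φ` of `P` of odd order which is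
trivial on such an `A` is trivial: if `φ` fixes `y ^ 2` with `y ∈ C_P(A)`, then `u = y⁻¹ φ(y)` is
inverted by `y`, so `u ^ 2 = 1`, so `u ∈ A` is fixed by `φ`, and `φ ^ n (y) = y u ^ n` forces
`u = 1`; for general `y ∈ P` one has `u ∈ C_P(A)`, and the same formula applies.

Hence `N_G(P) ∩ P C_G(A)` acts on `P` as a `p`-group with `p = 2`, so its action is already
realized by any of its Sylow `p`-subgroups `V`. By the control of fusion on `A`, some element of
`C_G(A)` conjugates `V ≥ P` into `H`, and conjugation by `g` on `P` may be corrected by `H` to be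
trivial on `A`. In `L = P C_G(A)` a conjugate of `P` inside `H` is either a Sylow subgroup of
`L ∩ H`, and then Sylow's theorem provides the required element of `H`, or it is properly contained
in a `p`-subgroup of `L ∩ H` that normalizes it, to which induction applies.
-/

open scoped Pointwise

section Elements

variable {G : Type*} [Group G]

theorem semiconjBy_inv_of_sq_eq_sq {b y : G} (h : b ^ 2 = y ^ 2) :
    SemiconjBy y (y⁻¹ * b) (y⁻¹ * b)⁻¹ := by
  calc y * (y⁻¹ * b) = b⁻¹ * b ^ 2 := by group
    _ = (y⁻¹ * b)⁻¹ * y := by rw [h, sq, mul_inv_rev, inv_inv, mul_assoc]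

theorem sq_eq_one_of_semiconjBy_inv {u y : G} (hinv : SemiconjBy y u u⁻¹)
    (hcomm : ∀ n : ℕ, (u ^ n) ^ 4 = 1 → Commute (u ^ n) y) {k : ℕ} (hk : u ^ 2 ^ k = 1) :
    u ^ 2 = 1 := by
  have halve (m : ℕ) (hm : u ^ 2 ^ (m + 2) = 1) : u ^ 2 ^ (m + 1) = 1 := by
    have hfix : Commute (u ^ 2 ^ m) y := hcomm _ (by rw [← pow_mul, ← hm, pow_add]; norm_num)
    have hinv' : SemiconjBy y (u ^ 2 ^ m) (u ^ 2 ^ m)⁻¹ := by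
      simpa only [inv_pow] using hinv.pow_right (2 ^ m)
    rw [pow_succ, pow_mul, sq, mul_eq_one_iff_eq_inv]
    exact mul_right_cancel (hfix.eq.trans hinv'.eq)
  induction k with
  | zero => simp_all
  | succ k ih =>
    cases k with
    | zero => simpa using hk
    | succ k => exact ih (halve k hk)

theorem sq_inv_mul_eq_one_of_sq_eq_sq {b y : G} (h : b ^ 2 = y ^ 2)
    (hcomm : ∀ n : ℕ, ((y⁻¹ * b) ^ n) ^ 4 = 1 → Commute ((y⁻¹ * b) ^ n) y) {k : ℕ}
    (hk : (y⁻¹ * b) ^ 2 ^ k = 1) : (y⁻¹ * b) ^ 2 = 1 :=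
  sq_eq_one_of_semiconjBy_inv (semiconjBy_inv_of_sq_eq_sq h) hcomm hk

theorem pow_apply_eq_mul_pow {φ : MulAut G} {y u : G} (hy : φ y = y * u) (hu : φ u = u)
    (n : ℕ) : (φ ^ n) y = y * u ^ n := by
  induction n with
  | zero => simp
  | succ n ih =>
    rw [pow_succ', MulAut.mul_apply, ih, map_mul, map_pow, hy, hu, mul_assoc, ← pow_succ']

theorem apply_eq_self_of_apply_inv_mul {p n : ℕ} (hG : IsPGroup p G) {φ : MulAut G}
    (hφ : φ ^ n = 1) (hn : n.Coprime p) {y : G} (hy : φ (y⁻¹ * φ y) = y⁻¹ * φ y) :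
    φ y = y := by
  obtain ⟨k, hk⟩ := hG (y⁻¹ * φ y)
  have hn' : (y⁻¹ * φ y) ^ n = 1 := by
    simpa [hφ] using pow_apply_eq_mul_pow (mul_inv_cancel_left y (φ y)).symm hy n
  have hu : (y⁻¹ * φ y) ^ n.gcd (p ^ k) = 1 := pow_gcd_eq_one.2 ⟨hn', hk⟩
  rw [hn.pow_right k, pow_one, inv_mul_eq_one] at hu
  exact hu.symm

end Elements

/-- `A` consists of exactly those elements of its own centralizer whose order divides `n`. Such
an `A` is abelian of exponent dividing `n`, and it is maximal with this property. -/
def IsCentralizerTorsion {G : Type*} [Group G] (n : ℕ) (A : Subgroup G) : Prop :=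
  ∀ x, x ∈ A ↔ x ∈ Subgroup.centralizer (A : Set G) ∧ x ^ n = 1

namespace IsCentralizerTorsion

variable {P : Type*} [Group P] {A : Subgroup P}

theorem apply_eq_self_of_mem_centralizer (hA : IsCentralizerTorsion 4 A) (hP : IsPGroup 2 P)
    {φ : MulAut P} (hφA : ∀ a ∈ A, φ a = a) {n : ℕ} (hφ : φ ^ n = 1) (hn : n.Coprime 2)
    {y : P} (hy : y ∈ Subgroup.centralizer (A : Set P)) : φ y = y := by
  have map_mem {x : P} (hx : x ∈ Subgroup.centralizer (A : Set P)) :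
      φ x ∈ Subgroup.centralizer (A : Set P) := fun a ha ↦ by
    simpa [hφA a ha] using congrArg φ (hx a ha)
  obtain ⟨k, hk⟩ := hP y
  induction k generalizing y with
  | zero => simp_all
  | succ k ih =>
    have hsq : φ y ^ 2 = y ^ 2 := by
      rw [← map_pow, ih (pow_mem hy 2) (by rwa [← pow_mul, ← pow_succ'])]
    have hu : y⁻¹ * φ y ∈ Subgroup.centralizer (A : Set P) := mul_mem (inv_mem hy) (map_mem hy)
    obtain ⟨_, hk'⟩ := hP (y⁻¹ * φ y)
    have hu2 : (y⁻¹ * φ y) ^ 2 = 1 :=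
      sq_inv_mul_eq_one_of_sq_eq_sq hsq (fun m hm ↦ hy _ ((hA _).2 ⟨pow_mem hu m, hm⟩)) hk'
    have huA : y⁻¹ * φ y ∈ A := (hA _).2 ⟨hu, by rw [pow_mul _ 2 2, hu2, one_pow]⟩
    exact apply_eq_self_of_apply_inv_mul hP hφ hn (hφA _ huA)

theorem mulAut_eq_one (hA : IsCentralizerTorsion 4 A) [hAn : A.Normal] (hP : IsPGroup 2 P)
    {φ : MulAut P} (hφA : ∀ a ∈ A, φ a = a) {n : ℕ} (hφ : φ ^ n = 1) (hn : n.Coprime 2) :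
    φ = 1 := by
  ext x
  refine apply_eq_self_of_apply_inv_mul hP hφ hn
    (hA.apply_eq_self_of_mem_centralizer hP hφA hφ hn fun a ha ↦ ?_)
  have hconj : φ x * a * (φ x)⁻¹ = x * a * x⁻¹ := by
    rw [← hφA _ (hAn.conj_mem a ha x), map_mul, map_mul, map_inv, hφA a ha]
  calc a * (x⁻¹ * φ x) = x⁻¹ * (x * a * x⁻¹) * φ x := by group
    _ = x⁻¹ * φ x * a := by rw [← hconj]; group

end IsCentralizerTorsion

theorem mk'_mem_center_iff {G : Type*} [Group G] {N : Subgroup G} [N.Normal] {y : G} :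
    QuotientGroup.mk' N y ∈ Subgroup.center (G ⧸ N) ↔ ∀ w, y⁻¹ * (w * y * w⁻¹) ∈ N := by
  rw [Subgroup.mem_center_iff, (QuotientGroup.mk'_surjective N).forall]
  refine forall_congr' fun w ↦ ?_
  rw [← QuotientGroup.eq_one_iff, ← QuotientGroup.mk'_apply, map_mul, map_inv, inv_mul_eq_one,
    map_mul, map_mul, map_inv, eq_mul_inv_iff_mul_eq, eq_comm]

/-- `Y` is a normal `2`-subgroup all of whose elements of order dividing `4` are central. This is
what remains of a central series term of `P / A` inside `C_P(A)`, and it passes to the quotient by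
the central involutions in `Y`, which makes induction possible. -/
structure IsFourCentral {W : Type*} [Group W] (Y : Subgroup W) : Prop where
  normal : Y.Normal
  isPGroup : IsPGroup 2 Y
  mem_center : ∀ y ∈ Y, y ^ 4 = 1 → y ∈ Subgroup.center W

/-- The elements of `Y` that are central in the whole group and have order dividing `2`. The
identity is included, so that they form a subgroup by which to take quotients. -/
def centralInvolutions {W : Type*} [Group W] (Y : Subgroup W) : Subgroup W where
  carrier := {z | z ∈ Y ∧ z ∈ Subgroup.center W ∧ z ^ 2 = 1}
  one_mem' := ⟨one_mem _, one_mem _, one_pow 2⟩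
  mul_mem' := fun ⟨ha, hac, ha2⟩ ⟨hb, hbc, hb2⟩ ↦ ⟨mul_mem ha hb, mul_mem hac hbc, by
    rw [Commute.mul_pow (hac.comm _), ha2, hb2, one_mul]⟩
  inv_mem' := fun ⟨ha, hac, ha2⟩ ↦ ⟨inv_mem ha, inv_mem hac, by rw [inv_pow, ha2, inv_one]⟩

instance {W : Type*} [Group W] (Y : Subgroup W) : (centralInvolutions Y).Normal where
  conj_mem z hz g := by rwa [(Subgroup.mem_center_iff.1 hz.2.1 g), mul_inv_cancel_right]

namespace IsFourCentral

variable {W : Type*} [Group W] {Y : Subgroup W}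

theorem inv_mul_conj_mem (hY : IsFourCentral Y) {y : W} (hy : y ∈ Y) (h8 : y ^ 8 = 1) (w : W) :
    y⁻¹ * (w * y * w⁻¹) ∈ centralInvolutions Y := by
  have hu : y⁻¹ * (w * y * w⁻¹) ∈ Y := mul_mem (inv_mem hy) (hY.normal.conj_mem y hy w)
  have hy2 : y ^ 2 ∈ Subgroup.center W := hY.mem_center _ (pow_mem hy 2) (by rwa [← pow_mul])
  have hsq : (w * y * w⁻¹) ^ 2 = y ^ 2 := by
    rw [conj_pow, Subgroup.mem_center_iff.1 hy2 w, mul_inv_cancel_right]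
  obtain ⟨_, hk⟩ := hY.isPGroup ⟨_, hu⟩
  have hu2 : (y⁻¹ * (w * y * w⁻¹)) ^ 2 = 1 := sq_inv_mul_eq_one_of_sq_eq_sq hsq
    (fun m hm ↦ (hY.mem_center _ (pow_mem hu m) hm).comm y) (congrArg Subtype.val hk)
  exact ⟨hu, hY.mem_center _ hu (by rw [pow_mul _ 2 2, hu2, one_pow]), hu2⟩

theorem pow_eight_eq_one {y : W}
    (h4 : (QuotientGroup.mk' (centralInvolutions Y) y) ^ 4 = 1) : y ^ 8 = 1 := by
  rw [← map_pow, QuotientGroup.mk'_apply, QuotientGroup.eq_one_iff] at h4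
  rw [pow_mul y 4 2, h4.2.2]

theorem map_mk' (hY : IsFourCentral Y) :
    IsFourCentral (Y.map (QuotientGroup.mk' (centralInvolutions Y))) where
  normal := hY.normal.map _ (QuotientGroup.mk'_surjective _)
  isPGroup := hY.isPGroup.map _
  mem_center := by
    rintro _ ⟨y, hy, rfl⟩ h4
    exact mk'_mem_center_iff.2 fun w ↦ hY.inv_mul_conj_mem hy (pow_eight_eq_one h4) w

theorem mul_pow_four (hY : IsFourCentral Y) {y : W} (hy : y ∈ Y) (h8 : y ^ 8 = 1) (x : W) :
    (x * y) ^ 4 = x ^ 4 * y ^ 4 := by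
  obtain ⟨-, huc, hu2⟩ := hY.inv_mul_conj_mem hy h8 x⁻¹
  set u := y⁻¹ * (x⁻¹ * y * x⁻¹⁻¹) with hu
  have hy2 : y ^ 2 ∈ Subgroup.center W := hY.mem_center _ (pow_mem hy 2) (by rwa [← pow_mul])
  have hyx : y * x = x * (y * u) := by rw [hu]; group
  have hsq : (x * y) ^ 2 = x ^ 2 * y ^ 2 * u := by
    calc (x * y) ^ 2 = x * (y * x) * y := by rw [sq]; group
      _ = x * (x * (y * (u * y))) := by rw [hyx]; group
      _ = x ^ 2 * y ^ 2 * u := by rw [← Subgroup.mem_center_iff.1 huc y, sq, sq]; group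
  calc (x * y) ^ 4 = (x ^ 2 * y ^ 2 * u) ^ 2 := by rw [← hsq, ← pow_mul]
    _ = (x ^ 2 * y ^ 2) ^ 2 := by rw [Commute.mul_pow (huc.comm _).symm, hu2, mul_one]
    _ = x ^ 4 * y ^ 4 := by rw [Commute.mul_pow (hy2.comm _).symm, ← pow_mul, ← pow_mul]

theorem pow_four_eq_one (hY : IsFourCentral Y) {x y : W} (hx : x ^ 4 = 1) (hy : y ∈ Y)
    (hxy : (x * y) ^ 4 = 1) : y ^ 4 = 1 := by
  obtain ⟨k, hk⟩ := hY.isPGroup ⟨y, hy⟩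
  replace hk : y ^ 2 ^ k = 1 := congrArg Subtype.val hk
  induction k generalizing W with
  | zero => simp_all
  | succ k ih =>
    let π := QuotientGroup.mk' (centralInvolutions Y)
    have hsq : (y ^ 2 ^ k) ^ 2 = 1 := by rw [← pow_mul, ← pow_succ, hk]
    have hk' : y ^ 2 ^ k ∈ centralInvolutions Y :=
      ⟨pow_mem hy _, hY.mem_center _ (pow_mem hy _) (by rw [pow_mul _ 2 2, hsq, one_pow]), hsq⟩
    have h4 : π y ^ 4 = 1 :=
      ih hY.map_mk' (x := π x) (by rw [← map_pow, hx, map_one]) ⟨y, hy, rfl⟩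
        (by rw [← map_mul, ← map_pow, hxy, map_one])
        (by rw [← map_pow]; exact (QuotientGroup.eq_one_iff _).2 hk')
    rwa [hY.mul_pow_four hy (pow_eight_eq_one h4), hx, one_mul] at hxy

end IsFourCentral

/-- `A` is abelian of exponent dividing `n`. Commutativity is encoded as `A ≤ C_G(A)`, the form in
which it combines with suprema and normalizers. -/
structure IsAbelianOfExponentDvd {G : Type*} [Group G] (n : ℕ) (A : Subgroup G) : Prop where
  le_centralizer : A ≤ Subgroup.centralizer (A : Set G)
  pow_eq_one : ∀ a ∈ A, a ^ n = 1

namespace IsAbelianOfExponentDvd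

variable {G : Type*} [Group G] {n : ℕ} {A : Subgroup G}

theorem zpowers_sup (hA : IsAbelianOfExponentDvd n A) {x : G}
    (hx : x ∈ Subgroup.centralizer (A : Set G)) (hxn : x ^ n = 1) :
    IsAbelianOfExponentDvd n (Subgroup.zpowers x ⊔ A) where
  le_centralizer := by
    have hxA : Subgroup.zpowers x ≤ Subgroup.centralizer (A : Set G) := Subgroup.zpowers_le.2 hx
    rw [Subgroup.le_centralizer_iff]
    refine sup_le ?_ ?_ <;> rw [Subgroup.le_centralizer_iff] <;> refine sup_le ?_ ?_
    · exact Subgroup.le_centralizer _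
    · exact Subgroup.le_centralizer_iff.1 hxA
    · exact hxA
    · exact hA.le_centralizer
  pow_eq_one z hz := by
    have hxN : Subgroup.zpowers x ≤ Subgroup.normalizer (A : Set G) :=
      (Subgroup.zpowers_le.2 hx).trans (Subgroup.centralizer_le_normalizer _)
    rw [← SetLike.mem_coe, Subgroup.coe_mul_of_left_le_normalizer_right _ _ hxN] at hz
    obtain ⟨_, ⟨m, rfl⟩, a, ha, rfl⟩ := hz
    have hcomm : Commute (x ^ m) a := Commute.zpow_left (hx a ha).symm m
    simp only [hcomm.mul_pow, hA.pow_eq_one a ha, mul_one]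
    rw [← zpow_natCast, zpow_comm, zpow_natCast, hxn, one_zpow]

theorem map {G' : Type*} [Group G'] (hA : IsAbelianOfExponentDvd n A) (f : G →* G') :
    IsAbelianOfExponentDvd n (A.map f) where
  le_centralizer := by
    rintro _ ⟨a, ha, rfl⟩ _ ⟨b, hb, rfl⟩
    rw [← map_mul, ← map_mul, hA.le_centralizer ha b hb]
  pow_eq_one := by
    rintro _ ⟨a, ha, rfl⟩
    rw [← map_pow, hA.pow_eq_one a ha, map_one]

end IsAbelianOfExponentDvd

theorem IsCentralizerTorsion.isAbelianOfExponentDvd {G : Type*} [Group G] {n : ℕ}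
    {A : Subgroup G} (hA : IsCentralizerTorsion n A) : IsAbelianOfExponentDvd n A :=
  ⟨fun x hx ↦ ((hA x).1 hx).1, fun x hx ↦ ((hA x).1 hx).2⟩

theorem normal_of_le_center {G : Type*} [Group G] {Z : Subgroup G}
    (hZ : Z ≤ Subgroup.center G) : Z.Normal where
  conj_mem z hz g := by rwa [Subgroup.mem_center_iff.1 (hZ hz) g, mul_inv_cancel_right]

theorem zpowers_sup_normal {G : Type*} [Group G] {A : Subgroup G} [A.Normal] {x : G}
    (hx : QuotientGroup.mk' A x ∈ Subgroup.center (G ⧸ A)) :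
    (Subgroup.zpowers x ⊔ A).Normal := by
  have hnormal : (Subgroup.zpowers (QuotientGroup.mk' A x)).Normal :=
    normal_of_le_center (Subgroup.zpowers_le.2 hx)
  rw [← MonoidHom.map_zpowers] at hnormal
  simpa only [Subgroup.comap_map_eq, QuotientGroup.ker_mk'] using
    hnormal.comap (QuotientGroup.mk' A)

section Existence

variable {P : Type*} [Group P] {A : Subgroup P}

theorem isFourCentral_subgroupOf_centralizer (hP : IsPGroup 2 P) {Z : Subgroup P} [Z.Normal]
    (hZ : ∀ y ∈ Z, y ∈ Subgroup.centralizer (A : Set P) → y ^ 4 = 1 → y ∈ A) :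
    IsFourCentral (Z.subgroupOf (Subgroup.centralizer (A : Set P))) where
  normal := inferInstance
  isPGroup := (hP.to_subgroup _).to_subgroup _
  mem_center y hy hy4 := Subgroup.mem_center_iff.2 fun w ↦
    Subtype.ext (w.2 _ (hZ y hy y.2 (congrArg Subtype.val hy4))).symm

theorem inv_mul_conj_mem_of_mem (hP : IsPGroup 2 P) [A.Normal] {Z : Subgroup P} [Z.Normal]
    (hZ : ∀ y ∈ Z, y ∈ Subgroup.centralizer (A : Set P) → y ^ 4 = 1 → y ∈ A)
    {x g : P} (hx : x ∈ Subgroup.centralizer (A : Set P)) (hx4 : x ^ 4 = 1)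
    (hxg : x⁻¹ * (g * x * g⁻¹) ∈ Z) : x⁻¹ * (g * x * g⁻¹) ∈ A := by
  have hyC : x⁻¹ * (g * x * g⁻¹) ∈ Subgroup.centralizer (A : Set P) :=
    mul_mem (inv_mem hx) (Subgroup.Normal.conj_mem inferInstance x hx g)
  have hxy : (x * (x⁻¹ * (g * x * g⁻¹))) ^ 4 = 1 := by simp [conj_pow, hx4]
  have hy4 := (isFourCentral_subgroupOf_centralizer hP hZ).pow_four_eq_one (x := ⟨x, hx⟩)
    (y := ⟨_, hyC⟩) (Subtype.ext hx4) hxg (Subtype.ext hxy)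
  exact hZ _ hxg hyC (congrArg Subtype.val hy4)

theorem inv_mul_conj_mem_upperCentralSeries {G : Type*} [Group G] {x : G} {i : ℕ}
    (hx : x ∈ Subgroup.upperCentralSeries G (i + 1)) (g : G) :
    x⁻¹ * (g * x * g⁻¹) ∈ Subgroup.upperCentralSeries G i := by
  simpa [mul_assoc, commutatorElement_def] using
    Subgroup.mem_upperCentralSeries_succ_iff.1 (inv_mem hx) g

theorem exists_normal_isCentralizerTorsion_four [Finite P] (hP : IsPGroup 2 P) :
    ∃ A : Subgroup P, A.Normal ∧ IsCentralizerTorsion 4 A := by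
  obtain ⟨A, ⟨hAn, hA⟩, hmax⟩ := (Set.toFinite
    {A : Subgroup P | A.Normal ∧ IsAbelianOfExponentDvd 4 A}).exists_maximal
    ⟨⊥, inferInstance, bot_le, by simp⟩
  have hcenter {x : P} (hx : x ∈ Subgroup.centralizer (A : Set P)) (hx4 : x ^ 4 = 1)
      (hxZ : QuotientGroup.mk' A x ∈ Subgroup.center (P ⧸ A)) : x ∈ A :=
    hmax ⟨zpowers_sup_normal hxZ, hA.zpowers_sup hx hx4⟩ le_sup_right
      (Subgroup.mem_sup_left (Subgroup.mem_zpowers x))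
  have hseries (i : ℕ) : ∀ x ∈ (Subgroup.upperCentralSeries (P ⧸ A) i).comap
      (QuotientGroup.mk' A), x ∈ Subgroup.centralizer (A : Set P) → x ^ 4 = 1 → x ∈ A := by
    induction i with
    | zero => simp +contextual
    | succ i ih =>
      intro x hxi hx hx4
      refine hcenter hx hx4 (mk'_mem_center_iff.2 fun g ↦ inv_mul_conj_mem_of_mem hP ih hx hx4 ?_)
      simpa using inv_mul_conj_mem_upperCentralSeries hxi (QuotientGroup.mk' A g)
  have : Group.IsNilpotent (P ⧸ A) := (hP.to_quotient A).isNilpotent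
  refine ⟨A, hAn, fun x ↦ ⟨fun hx ↦ ⟨hA.le_centralizer hx, hA.pow_eq_one x hx⟩, fun hx ↦
    hseries (Group.nilpotencyClass (P ⧸ A)) x ?_ hx.1 hx.2⟩⟩
  simp [Subgroup.upperCentralSeries_nilpotencyClass]

end Existence

section Conjugation

variable {G : Type*} [Group G] {P Q : Subgroup G} {g h : G}

theorem conj_smul_le_iff : MulAut.conj g • P ≤ Q ↔ ∀ x ∈ P, g * x * g⁻¹ ∈ Q :=
  Subgroup.map_le_iff_le_comap

theorem forall_conj_eq_conj_iff : (∀ x ∈ P, h * x * h⁻¹ = g * x * g⁻¹) ↔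
    h⁻¹ * g ∈ Subgroup.centralizer (P : Set G) := by
  refine forall₂_congr fun x _ ↦ ?_
  rw [eq_mul_inv_iff_mul_eq, mul_assoc, mul_assoc, ← eq_inv_mul_iff_mul_eq, ← mul_assoc,
    ← mul_assoc]

theorem mem_centralizer_conj_smul {c : G} :
    c ∈ Subgroup.centralizer (MulAut.conj g • P : Subgroup G) ↔
      g⁻¹ * c * g ∈ Subgroup.centralizer (P : Set G) := by
  rw [Subgroup.mem_centralizer_iff, Subgroup.mem_centralizer_iff, Subgroup.coe_pointwise_smul,
    ← Set.image_smul, Set.forall_mem_image]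
  refine forall₂_congr fun x _ ↦ ?_
  simp only [MulAut.smul_def, MulAut.conj_apply]
  rw [← mul_right_inj g⁻¹, ← mul_left_inj g]
  simp only [mul_assoc, inv_mul_cancel_left, inv_mul_cancel, mul_one]

theorem mem_normalizer_iff_conj_smul_eq :
    g ∈ Subgroup.normalizer (P : Set G) ↔ MulAut.conj g • P = P :=
  Subgroup.mem_normalizer_iff_map_conj_eq

theorem mem_normalizer_conj_smul {c : G} :
    c ∈ Subgroup.normalizer ((MulAut.conj g • P : Subgroup G) : Set G) ↔
      g⁻¹ * c * g ∈ Subgroup.normalizer (P : Set G) := by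
  simp only [mem_normalizer_iff_conj_smul_eq, map_mul, mul_smul, map_inv, inv_smul_eq_iff]

theorem conj_smul_le_iff_le {L : Subgroup G} (hg : g ∈ L) : MulAut.conj g • P ≤ L ↔ P ≤ L := by
  rw [Subgroup.pointwise_smul_subset_iff, ← map_inv, Subgroup.conj_smul_eq_self_of_mem (inv_mem hg)]

theorem conj_smul_mono (hPQ : P ≤ Q) : MulAut.conj g • P ≤ MulAut.conj g • Q :=
  Subgroup.pointwise_smul_le_pointwise_smul_iff.2 hPQ

theorem isPGroup_conj_smul {p : ℕ} (hP : IsPGroup p P) (g : G) :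
    IsPGroup p (MulAut.conj g • P : Subgroup G) :=
  hP.map _

theorem card_conj_smul (g : G) (P : Subgroup G) :
    Nat.card (MulAut.conj g • P : Subgroup G) = Nat.card P :=
  Nat.card_congr (Subgroup.equivSMul _ P).symm.toEquiv

end Conjugation

section Fusion

variable {G : Type*} [Group G]

/-- `H` controls the fusion of `P` in `G`: conjugation maps from `P` into `H` by elements of `G` are
induced by elements of `H`. The subgroup `P` is allowed to lie outside `H`. -/
def ControlsFusionOf (H P : Subgroup G) : Prop :=
  ∀ g, (∀ x ∈ P, g * x * g⁻¹ ∈ H) → ∃ h ∈ H, ∀ x ∈ P, h * x * h⁻¹ = g * x * g⁻¹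

theorem controlsFusionOf_iff {H P : Subgroup G} : ControlsFusionOf H P ↔
    ∀ g, MulAut.conj g • P ≤ H → ∃ h ∈ H, h⁻¹ * g ∈ Subgroup.centralizer (P : Set G) := by
  simp only [ControlsFusionOf, conj_smul_le_iff, forall_conj_eq_conj_iff]

end Fusion

section Sylow

variable {G : Type*} [Group G] {p : ℕ}

theorem exists_le_map_sylow {L R : Subgroup G} (hR : IsPGroup p R) (hRL : R ≤ L) :
    ∃ T : Sylow p L, R ≤ T.map L.subtype := by
  obtain ⟨T, hT⟩ := (hR.comap_of_injective L.subtype L.subtype_injective).exists_le_sylow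
  exact ⟨T, (Subgroup.map_subgroupOf_eq_of_le hRL).ge.trans (Subgroup.map_mono hT)⟩

theorem exists_conj_smul_le_map_sylow [Fact p.Prime] {L R : Subgroup G} [Finite L] (T : Sylow p L)
    (hR : IsPGroup p R) (hRL : R ≤ L) :
    ∃ l ∈ L, MulAut.conj l • R ≤ T.map L.subtype := by
  obtain ⟨Q, hQ⟩ := exists_le_map_sylow hR hRL
  obtain ⟨l, hl⟩ := MulAction.exists_smul_eq L Q T
  refine ⟨l, l.2, conj_smul_le_iff.2 fun x hx ↦ ?_⟩
  obtain ⟨y, hy, rfl⟩ := hQ hx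
  exact ⟨l * y * l⁻¹, hl ▸ Subgroup.smul_mem_pointwise_smul y (MulAut.conj l) _ hy, rfl⟩

theorem exists_mem_sylow_inv_mul_mem [Fact p.Prime] {N : Type*} [Group N] [Finite N]
    (V : Sylow p N) {C : Subgroup N} [C.Normal] (hC : IsPGroup p (N ⧸ C)) (n : N) :
    ∃ v ∈ V, v⁻¹ * n ∈ C := by
  have htop : (V : Subgroup N).map (QuotientGroup.mk' C) = ⊤ := by
    rw [← Sylow.coe_mapSurjective (QuotientGroup.mk'_surjective C)]
    exact (Sylow.is_maximal' _ (hC.to_subgroup ⊤) le_top).symm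
  obtain ⟨v, hv, hvn⟩ := htop.ge (Subgroup.mem_top (QuotientGroup.mk' C n))
  exact ⟨v, hv, QuotientGroup.eq.1 hvn⟩

theorem exists_lt_le_normalizer {Q T : Subgroup G} [Fact p.Prime] [Finite T]
    (hT : IsPGroup p T) (hQT : Q < T) :
    ∃ R, Q < R ∧ R ≤ T ∧ R ≤ Subgroup.normalizer (Q : Set G) := by
  have : Group.IsNilpotent T := hT.isNilpotent
  have hlt : Q.subgroupOf T < Subgroup.normalizer (Q.subgroupOf T : Set T) :=
    Group.normalizerCondition_of_isNilpotent _ <|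
      lt_top_iff_ne_top.2 fun h ↦ hQT.not_ge (Subgroup.subgroupOf_eq_top.1 h)
  rw [← Subgroup.subgroupOf_normalizer_eq hQT.le] at hlt
  refine ⟨Subgroup.normalizer (Q : Set G) ⊓ T, ?_, inf_le_right, inf_le_left⟩
  refine lt_of_le_not_ge (le_inf Subgroup.le_normalizer hQT.le) fun h ↦ hlt.not_ge ?_
  exact fun x hx ↦ h ⟨hx, x.2⟩

end Sylow

theorem exists_mem_centralizer_conj_smul_le {G : Type*} [Group G] {p : ℕ} [Fact p.Prime]
    [Finite (Sylow p G)] {S : Sylow p G} {H A V : Subgroup G}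
    (hSH : (S : Subgroup G) ≤ H) (hA : ControlsFusionOf H A) (hV : IsPGroup p V) (hAV : A ≤ V) :
    ∃ y ∈ Subgroup.centralizer (A : Set G), MulAut.conj y • V ≤ H := by
  obtain ⟨Q, hVQ⟩ := hV.exists_le_sylow
  obtain ⟨x, hx⟩ := MulAction.exists_smul_eq G Q S
  have hxV : MulAut.conj x • V ≤ H := calc
    MulAut.conj x • V ≤ MulAut.conj x • (Q : Subgroup G) := conj_smul_mono hVQ
    _ = S := by rw [← hx, Sylow.coe_subgroup_smul]
    _ ≤ H := hSH
  obtain ⟨h, hh, hhx⟩ := controlsFusionOf_iff.1 hA x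
    ((conj_smul_mono hAV).trans hxV)
  exact ⟨h⁻¹ * x, hhx, by rwa [map_mul, mul_smul, conj_smul_le_iff_le (inv_mem hh)]⟩

section Extension

variable {G : Type*} [Group G] [Finite G] {p : ℕ} [Fact p.Prime] {H L P : Subgroup G}

theorem exists_mem_normalizer_inv_mul_mem_centralizer_of_lt
    (V : Sylow p ↥(L ⊓ Subgroup.normalizer (P : Set G))) {y z : G}
    (hyV : MulAut.conj y • V.map (Subgroup.subtype _) ≤ H) (hz : z ∈ L)
    {R : Subgroup G} (hR : IsPGroup p R) (hRL : R ≤ L) (hPR : MulAut.conj z • P ≤ R)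
    (hRP : R ≤ Subgroup.normalizer ((MulAut.conj z • P : Subgroup G) : Set G))
    (hRH : ControlsFusionOf H R) :
    ∃ n ∈ L ⊓ Subgroup.normalizer (P : Set G), ∃ h ∈ H,
      n⁻¹ * y⁻¹ * h * z ∈ Subgroup.centralizer (P : Set G) := by
  have hzR : MulAut.conj z⁻¹ • R ≤ L ⊓ Subgroup.normalizer (P : Set G) :=
    le_inf ((conj_smul_le_iff_le (inv_mem hz)).2 hRL) <| conj_smul_le_iff.2 fun r hr ↦ by
      simpa using mem_normalizer_conj_smul.1 (hRP hr)
  obtain ⟨n, hn, hnV⟩ := exists_conj_smul_le_map_sylow V (isPGroup_conj_smul hR _) hzR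
  have hyR : MulAut.conj (y * n * z⁻¹) • R ≤ H := by
    rw [map_mul, map_mul, mul_smul, mul_smul]
    exact (conj_smul_mono hnV).trans hyV
  obtain ⟨h, hh, hc⟩ := controlsFusionOf_iff.1 hRH _ hyR
  refine ⟨n, hn, h, hh, ?_⟩
  have hc' := inv_mem (mem_centralizer_conj_smul.1 (Subgroup.centralizer_le hPR hc))
  convert hc' using 1
  group

theorem exists_mem_normalizer_inv_mul_mem_centralizer_of_eq_sylow {y z : G} {V : Subgroup G}
    (hV : IsPGroup p V) (hPV : P ≤ V) (hVL : V ≤ L) (hyV : MulAut.conj y • V ≤ H) (hy : y ∈ L)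
    (hz : z ∈ L) (T : Sylow p ↥(L ⊓ H)) (hT : T.map (Subgroup.subtype _) = MulAut.conj z • P) :
    ∃ n ∈ L ⊓ Subgroup.normalizer (P : Set G), ∃ h ∈ H,
      n⁻¹ * y⁻¹ * h * z ∈ Subgroup.centralizer (P : Set G) := by
  obtain ⟨k, hk, hkV⟩ := exists_conj_smul_le_map_sylow T (isPGroup_conj_smul hV y)
    (le_inf ((conj_smul_le_iff_le hy).2 hVL) hyV)
  obtain ⟨hkL, hkH⟩ := Subgroup.mem_inf.1 hk
  have hle : MulAut.conj (k * y) • P ≤ MulAut.conj z • P := by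
    rw [map_mul, mul_smul, ← hT]
    exact (conj_smul_mono (conj_smul_mono hPV)).trans hkV
  have heq : MulAut.conj (k * y) • P = MulAut.conj z • P :=
    Subgroup.eq_of_le_of_card_ge hle (by simp only [card_conj_smul, le_refl])
  have hnP : (k * y)⁻¹ * z ∈ Subgroup.normalizer (P : Set G) := by
    rw [mem_normalizer_iff_conj_smul_eq, map_mul, map_inv, mul_smul, ← heq, inv_smul_smul]
  have hone : ((k * y)⁻¹ * z)⁻¹ * y⁻¹ * k⁻¹ * z = 1 := by group
  exact ⟨(k * y)⁻¹ * z, Subgroup.mem_inf.2 ⟨mul_mem (inv_mem (mul_mem hkL hy)) hz, hnP⟩, k⁻¹,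
    inv_mem hkH, hone ▸ one_mem _⟩

theorem exists_mem_normalizer_inv_mul_mem_centralizer (hPL : P ≤ L)
    (V : Sylow p ↥(L ⊓ Subgroup.normalizer (P : Set G)))
    (hPV : P ≤ V.map (Subgroup.subtype _))
    (hind : ∀ R : Subgroup G, IsPGroup p R → R ≤ H → Nat.card P < Nat.card R →
      ControlsFusionOf H R)
    {y z : G} (hyV : MulAut.conj y • V.map (Subgroup.subtype _) ≤ H)
    (hy : y ∈ L) (hz : z ∈ L) (hzP : MulAut.conj z • P ≤ H) :
    ∃ n ∈ L ⊓ Subgroup.normalizer (P : Set G), ∃ h ∈ H,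
      n⁻¹ * y⁻¹ * h * z ∈ Subgroup.centralizer (P : Set G) := by
  have hV : IsPGroup p (V.map (Subgroup.subtype _)) := V.2.map _
  have hP : IsPGroup p P := hV.to_le hPV
  have hzPL : MulAut.conj z • P ≤ L ⊓ H := le_inf ((conj_smul_le_iff_le hz).2 hPL) hzP
  obtain ⟨T, hT⟩ := exists_le_map_sylow (isPGroup_conj_smul hP z) hzPL
  have hTp : IsPGroup p (T.map (Subgroup.subtype _)) := T.2.map _
  have hTLH : T.map (Subgroup.subtype _) ≤ L ⊓ H := Subgroup.map_subtype_le _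
  rcases hT.eq_or_lt with heq | hlt
  · exact exists_mem_normalizer_inv_mul_mem_centralizer_of_eq_sylow hV hPV
      ((Subgroup.map_subtype_le _).trans inf_le_left) hyV hy hz T heq.symm
  · obtain ⟨R, hPR, hRT, hRN⟩ := exists_lt_le_normalizer hTp hlt
    have hRp := hTp.to_le hRT
    obtain ⟨hRL, hRH⟩ := le_inf_iff.1 (hRT.trans hTLH)
    have hcard : Nat.card P < Nat.card R := by
      rw [← card_conj_smul z P]
      exact Set.ncard_lt_ncard hPR
    exact exists_mem_normalizer_inv_mul_mem_centralizer_of_lt V hyV hz hRp hRL hPR.le hRN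
      (hind R hRp hRH hcard)

end Extension

/-- `A` is normal in `P`, and elements of order coprime to `p` normalizing `P` and centralizing `A`
centralize `P`. For `p`-groups `P` this lets control of fusion pass from `A` to `P`. -/
structure DetectsCoprimeAction {G : Type*} [Group G] (p : ℕ) (A P : Subgroup G) : Prop where
  le : A ≤ P
  le_normalizer : P ≤ Subgroup.normalizer (A : Set G)
  mem_centralizer : ∀ w ∈ Subgroup.normalizer (P : Set G), w ∈ Subgroup.centralizer (A : Set G) →
    (orderOf w).Coprime p → w ∈ Subgroup.centralizer (P : Set G)

section Detection

variable {G : Type*} [Group G] {p : ℕ} {A P : Subgroup G}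

theorem exists_coprime_orderOf_pow [Finite G] (hp : p.Prime) (w : G) :
    ∃ k : ℕ, (orderOf (w ^ p ^ k)).Coprime p := by
  obtain ⟨k, m, hm, hk⟩ := Nat.exists_eq_pow_mul_and_not_dvd (orderOf_pos w).ne' p hp.ne_one
  refine ⟨k, ?_⟩
  rw [orderOf_pow_of_dvd (pow_ne_zero k hp.ne_zero) (hk ▸ Dvd.intro m rfl), hk,
    Nat.mul_div_cancel_left m (pow_pos hp.pos k)]
  exact ((Nat.Prime.coprime_iff_not_dvd hp).2 hm).symm

theorem normalizer_le_normalizer_centralizer : Subgroup.normalizer (P : Set G) ≤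
    Subgroup.normalizer (Subgroup.centralizer (P : Set G) : Set G) :=
  (Subgroup.normal_subgroupOf_iff_le_normalizer (Subgroup.centralizer_le_normalizer _)).1
    inferInstance

theorem exists_pow_mem_centralizer_of_mem_sup (hP : IsPGroup p P)
    (hPA : P ≤ Subgroup.normalizer (A : Set G)) {n : G}
    (hn : n ∈ P ⊔ Subgroup.centralizer (A : Set G)) :
    ∃ k : ℕ, n ^ p ^ k ∈ Subgroup.centralizer (A : Set G) := by
  rw [← SetLike.mem_coe, Subgroup.coe_mul_of_left_le_normalizer_right _ _
    (hPA.trans normalizer_le_normalizer_centralizer)] at hn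
  obtain ⟨a, ha, c, hc, rfl⟩ := hn
  obtain ⟨k, hk⟩ := hP ⟨a, ha⟩
  replace hk : a ^ p ^ k = 1 := congrArg Subtype.val hk
  have hcN := Subgroup.centralizer_le_normalizer _ hc
  have hc1 : Subgroup.normalizerMonoidHom A ⟨c, hcN⟩ = 1 := by
    rw [← MonoidHom.mem_ker, Subgroup.normalizerMonoidHom_ker]
    exact hc
  have hker : (⟨a, hPA ha⟩ * ⟨c, hcN⟩ : Subgroup.normalizer (A : Set G)) ^ p ^ k ∈
      (Subgroup.normalizerMonoidHom A).ker := by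
    rw [MonoidHom.mem_ker, map_pow, map_mul, hc1, mul_one, ← map_pow,
      ← map_one (Subgroup.normalizerMonoidHom A)]
    exact congrArg _ (Subtype.ext hk)
  rw [Subgroup.normalizerMonoidHom_ker] at hker
  exact ⟨k, hker⟩

theorem exists_mem_map_sylow_inv_mul_mem_centralizer [Finite G] [Fact p.Prime] {M : Subgroup G}
    (hM : M ≤ Subgroup.normalizer (P : Set G))
    (hpow : ∀ n ∈ M, ∃ k : ℕ, n ^ p ^ k ∈ Subgroup.centralizer (P : Set G)) (V : Sylow p M)
    {n : G} (hn : n ∈ M) :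
    ∃ v ∈ V.map M.subtype, v⁻¹ * n ∈ Subgroup.centralizer (P : Set G) := by
  have : ((Subgroup.centralizer (P : Set G)).subgroupOf M).Normal :=
    Subgroup.normal_subgroupOf_of_le_normalizer (hM.trans normalizer_le_normalizer_centralizer)
  have hquot : IsPGroup p (M ⧸ (Subgroup.centralizer (P : Set G)).subgroupOf M) := by
    rintro ⟨n⟩
    obtain ⟨k, hk⟩ := hpow n n.2
    exact ⟨k, (QuotientGroup.eq_one_iff (n ^ p ^ k)).2 hk⟩
  obtain ⟨v, hv, hvn⟩ := exists_mem_sylow_inv_mul_mem V hquot ⟨n, hn⟩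
  exact ⟨v, Subgroup.mem_map_of_mem _ hv, hvn⟩

theorem DetectsCoprimeAction.exists_pow_mem_centralizer [Finite G] [Fact p.Prime]
    (hAP : DetectsCoprimeAction p A P) (hP : IsPGroup p P) {n : G}
    (hn : n ∈ (P ⊔ Subgroup.centralizer (A : Set G)) ⊓ Subgroup.normalizer (P : Set G)) :
    ∃ k : ℕ, n ^ p ^ k ∈ Subgroup.centralizer (P : Set G) := by
  obtain ⟨hnA, hnP⟩ := Subgroup.mem_inf.1 hn
  obtain ⟨k, hk⟩ := exists_pow_mem_centralizer_of_mem_sup hP hAP.le_normalizer hnA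
  obtain ⟨j, hj⟩ := exists_coprime_orderOf_pow (Fact.out : p.Prime) (n ^ p ^ k)
  refine ⟨k + j, ?_⟩
  rw [pow_add, pow_mul]
  exact hAP.mem_centralizer _ (pow_mem (pow_mem hnP _) _) (pow_mem hk _) hj

theorem detectsCoprimeAction_of_isCentralizerTorsion_four (hP : IsPGroup 2 P) (hAP : A ≤ P)
    [hA : (A.subgroupOf P).Normal] (hA4 : IsCentralizerTorsion 4 (A.subgroupOf P)) :
    DetectsCoprimeAction 2 A P where
  le := hAP
  le_normalizer := (Subgroup.normal_subgroupOf_iff_le_normalizer hAP).1 hA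
  mem_centralizer w hwP hwA hw := by
    have hfix : ∀ a ∈ A.subgroupOf P, Subgroup.normalizerMonoidHom P ⟨w, hwP⟩ a = a :=
      fun a ha ↦ Subtype.ext (mul_inv_eq_iff_eq_mul.2 (hwA a ha).symm)
    have hpow : Subgroup.normalizerMonoidHom P ⟨w, hwP⟩ ^ orderOf w = 1 := by
      rw [← map_pow, ← map_one (Subgroup.normalizerMonoidHom P)]
      exact congrArg _ (Subtype.ext (pow_orderOf_eq_one w))
    have hker : (⟨w, hwP⟩ : Subgroup.normalizer (P : Set G)) ∈
        (Subgroup.normalizerMonoidHom P).ker := hA4.mulAut_eq_one hP hfix hpow hw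
    rwa [Subgroup.normalizerMonoidHom_ker] at hker

theorem exists_detectsCoprimeAction [Finite P] (hP : IsPGroup 2 P) :
    ∃ A, DetectsCoprimeAction 2 A P ∧ IsAbelianOfExponentDvd 4 A := by
  obtain ⟨A, hA, hA4⟩ := exists_normal_isCentralizerTorsion_four hP
  have hAP : (A.map P.subtype).subgroupOf P = A :=
    Subgroup.comap_map_eq_self_of_injective P.subtype_injective A
  refine ⟨A.map P.subtype, ?_, hA4.isAbelianOfExponentDvd.map P.subtype⟩
  rw [← hAP] at hA hA4
  exact detectsCoprimeAction_of_isCentralizerTorsion_four hP (Subgroup.map_subtype_le A) hA4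

end Detection

section Control

variable {G : Type*} [Group G] [Finite G] {p : ℕ} [Fact p.Prime] {S : Sylow p G}
  {H A P : Subgroup G}

theorem DetectsCoprimeAction.exists_inv_mul_mem_centralizer (hAP : DetectsCoprimeAction p A P)
    (hP : IsPGroup p P)
    (V : Sylow p ↥((P ⊔ Subgroup.centralizer (A : Set G)) ⊓ Subgroup.normalizer (P : Set G)))
    (hPV : P ≤ V.map (Subgroup.subtype _))
    (hind : ∀ R : Subgroup G, IsPGroup p R → R ≤ H → Nat.card P < Nat.card R →
      ControlsFusionOf H R)
    {y z : G} (hyV : MulAut.conj y • V.map (Subgroup.subtype _) ≤ H)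
    (hy : y ∈ Subgroup.centralizer (A : Set G)) (hz : z ∈ Subgroup.centralizer (A : Set G))
    (hzP : MulAut.conj z • P ≤ H) :
    ∃ h ∈ H, y⁻¹ * h * z ∈ Subgroup.centralizer (P : Set G) := by
  obtain ⟨n, hn, h, hh, hc⟩ := exists_mem_normalizer_inv_mul_mem_centralizer le_sup_left V hPV
    hind hyV (Subgroup.mem_sup_right hy) (Subgroup.mem_sup_right hz) hzP
  obtain ⟨v, hv, hvn⟩ := exists_mem_map_sylow_inv_mul_mem_centralizer inf_le_right
    (fun _ ↦ hAP.exists_pow_mem_centralizer hP) V hn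
  refine ⟨y * v⁻¹ * y⁻¹ * h, mul_mem (conj_smul_le_iff.1 hyV _ (inv_mem hv)) hh, ?_⟩
  convert mul_mem hvn hc using 1
  group

theorem DetectsCoprimeAction.controlsFusionOf (hAP : DetectsCoprimeAction p A P)
    (hSH : (S : Subgroup G) ≤ H) (hP : IsPGroup p P) (hPH : P ≤ H) (hA : ControlsFusionOf H A)
    (hind : ∀ R : Subgroup G, IsPGroup p R → R ≤ H → Nat.card P < Nat.card R →
      ControlsFusionOf H R) : ControlsFusionOf H P := by
  refine controlsFusionOf_iff.2 fun g hg ↦ ?_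
  obtain ⟨k, hk, hkg⟩ := controlsFusionOf_iff.1 hA g ((conj_smul_mono hAP.le).trans hg)
  have hkgP : MulAut.conj (k⁻¹ * g) • P ≤ H := by
    rwa [map_mul, mul_smul, conj_smul_le_iff_le (inv_mem hk)]
  obtain ⟨V, hPV⟩ := exists_le_map_sylow hP (le_inf (le_sup_left
    (b := Subgroup.centralizer (A : Set G))) Subgroup.le_normalizer)
  obtain ⟨y, hy, hyV⟩ := exists_mem_centralizer_conj_smul_le hSH hA (V.2.map _)
    (hAP.le.trans hPV)
  -- Both `1` and `k⁻¹ * g` centralize `A` and conjugate `P` into `H`; compare each with `y`.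
  obtain ⟨h₁, hh₁, hc₁⟩ := hAP.exists_inv_mul_mem_centralizer hP V hPV hind hyV hy
    (one_mem _) (by simpa using hPH)
  obtain ⟨h₂, hh₂, hc₂⟩ := hAP.exists_inv_mul_mem_centralizer hP V hPV hind hyV hy hkg hkgP
  refine ⟨k * h₂⁻¹ * h₁, mul_mem (mul_mem hk (inv_mem hh₂)) hh₁, ?_⟩
  convert mul_mem (inv_mem hc₁) hc₂ using 1
  group

theorem controlsFusionOf_of_forall_exists_detectsCoprimeAction (hSH : (S : Subgroup G) ≤ H)
    (hdet : ∀ P : Subgroup G, IsPGroup p P → P ≤ H →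
      ∃ A, DetectsCoprimeAction p A P ∧ ControlsFusionOf H A)
    (hP : IsPGroup p P) (hPH : P ≤ H) : ControlsFusionOf H P := by
  induction hn : Nat.card G - Nat.card P using Nat.strong_induction_on generalizing P with
  | _ n ih =>
    obtain ⟨A, hAP, hA⟩ := hdet P hP hPH
    refine hAP.controlsFusionOf hSH hP hPH hA fun R hR hRH hcard ↦ ih _ ?_ hR hRH rfl
    have := R.card_le_card_group
    omega

theorem controlsFusionOf_of_forall_conj_smul_le (hSH : (S : Subgroup G) ≤ H) (hP : IsPGroup p P)
    (hPH : P ≤ H)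
    (hyp : ∀ a g : G, MulAut.conj a • P ≤ S → MulAut.conj g • MulAut.conj a • P ≤ S →
      ∃ h ∈ H, h⁻¹ * g ∈ Subgroup.centralizer (MulAut.conj a • P : Subgroup G)) :
    ControlsFusionOf H P := by
  have exists_conj_le {R : Subgroup G} (hR : IsPGroup p R) (hRH : R ≤ H) :
      ∃ a ∈ H, MulAut.conj a • R ≤ S := by
    have := exists_conj_smul_le_map_sylow (S.subtype hSH) hR hRH
    rwa [Sylow.coe_subtype, Subgroup.map_subgroupOf_eq_of_le hSH] at this
  refine controlsFusionOf_iff.2 fun g hg ↦ ?_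
  obtain ⟨a, ha, haP⟩ := exists_conj_le hP hPH
  obtain ⟨b, hb, hbP⟩ := exists_conj_le (isPGroup_conj_smul hP g) hg
  obtain ⟨h, hh, hc⟩ := hyp a (b * g * a⁻¹) haP (by
    simpa only [map_mul, map_inv, mul_smul, inv_smul_smul] using hbP)
  refine ⟨b⁻¹ * h * a, mul_mem (mul_mem (inv_mem hb) hh) ha, ?_⟩
  convert mem_centralizer_conj_smul.1 hc using 1
  group

end Control

theorem abelian_exponent_four_control_two_fusion_general
    {G : Type*} [Group G] [Finite G] (S : Sylow 2 G) (H : Subgroup G)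
    (hSH : (S : Subgroup G) ≤ H)
    (hyp : ∀ A B : Subgroup G, A ≤ (S : Subgroup G) → B ≤ (S : Subgroup G) →
      (∀ x ∈ A, ∀ y ∈ A, x * y = y * x) → (∀ x ∈ A, x ^ 4 = 1) →
      (∀ x ∈ B, ∀ y ∈ B, x * y = y * x) → (∀ x ∈ B, x ^ 4 = 1) →
      ∀ g : G, (∀ x ∈ A, g * x * g⁻¹ ∈ B) →
        ∃ h ∈ H, ∀ x ∈ A, h * x * h⁻¹ = g * x * g⁻¹)
    {P : Subgroup G} (hP : IsPGroup 2 P) (hPH : P ≤ H) : ControlsFusionOf H P := by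
  refine controlsFusionOf_of_forall_exists_detectsCoprimeAction hSH (fun P hP hPH ↦ ?_) hP hPH
  obtain ⟨A, hAP, hA⟩ := exists_detectsCoprimeAction hP
  refine ⟨A, hAP, controlsFusionOf_of_forall_conj_smul_le hSH (hP.to_le hAP.le)
    (hAP.le.trans hPH) fun a g haA hgA ↦ ?_⟩
  have hA₁ : IsAbelianOfExponentDvd 4 (MulAut.conj a • A) := hA.map _
  have hA₂ : IsAbelianOfExponentDvd 4 (MulAut.conj g • MulAut.conj a • A) := hA₁.map _
  obtain ⟨h, hh, hc⟩ := hyp _ _ haA hgA (fun x hx y hy ↦ hA₁.le_centralizer hy x hx)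
    hA₁.pow_eq_one (fun x hx y hy ↦ hA₂.le_centralizer hy x hx) hA₂.pow_eq_one g
    (conj_smul_le_iff.1 le_rfl)
  exact ⟨h, hh, forall_conj_eq_conj_iff.1 hc⟩

/-- **Control of 2-fusion detected on abelian subgroups of exponent at most 4.**
If `H` contains a Sylow `2`-subgroup `S` of the finite group `G` and the
`G`-fusion on abelian subgroups of `S` of exponent dividing `4` is realized in `H`,
then `H` controls `2`-fusion in `G`. -/
theorem abelian_exponent_four_control_two_fusion
    (G : Type) [Group G] [Finite G] (S : Sylow 2 G) (H : Subgroup G)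
    (hSH : (S : Subgroup G) ≤ H)
    (hyp : ∀ A B : Subgroup G, A ≤ (S : Subgroup G) → B ≤ (S : Subgroup G) →
      (∀ x ∈ A, ∀ y ∈ A, x * y = y * x) → (∀ x ∈ A, x ^ 4 = 1) →
      (∀ x ∈ B, ∀ y ∈ B, x * y = y * x) → (∀ x ∈ B, x ^ 4 = 1) →
      ∀ g : G, (∀ x ∈ A, g * x * g⁻¹ ∈ B) →
        ∃ h ∈ H, ∀ x ∈ A, h * x * h⁻¹ = g * x * g⁻¹) :
    ∀ P Q : Subgroup G, P ≤ (S : Subgroup G) → Q ≤ (S : Subgroup G) →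
      ∀ g : G, (∀ x ∈ P, g * x * g⁻¹ ∈ Q) →
        ∃ h ∈ H, ∀ x ∈ P, h * x * h⁻¹ = g * x * g⁻¹ :=
  fun _ _ hP hQ g hg ↦ abelian_exponent_four_control_two_fusion_general S H hSH hyp
    (S.2.to_le hP) (hP.trans hSH) g fun x hx ↦ hSH (hQ (hg x hx))
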